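/- Let f : ℝ → ℝ be twice continuously differentiable on (0,∞) with f''(x) > 0 for all x > 0 and f(1) = 0, with d_f(s) = ((1-s)/2)·f((1+s)/(1-s)) + ((1+s)/2)·f((1-s)/(1+s)). Let (Ω, μ) be a measure space, p, q : Ω → ℝ measurable with p, q > 0 everywhere and ∫ p dμ = ∫ q dμ = 1, assume the symmetric f-divergence integrand is μ-integrable with D̃_f = (1/2)∫ (q·f(p/q) + p·f(q/p)) dμ, and assume (1/2)∫|p−q| dμ < 1. Let X : Ω → ℝ be measurable with 0 ≤ X ≤ M for some M > 0, with X·p and X·q μ-integrable. Then d_f( |∫ X·p dμ − ∫ X·q dμ| / M ) ≤ D̃_f. -/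

import Mathlib

open MeasureTheory

/-- The binary symmetric f-divergence. -/
noncomputable def binDiv (f : ℝ → ℝ) (s : ℝ) : ℝ :=
  ((1 - s) / 2) * f ((1 + s) / (1 - s)) + ((1 + s) / 2) * f ((1 - s) / (1 + s))

/-!
Dividing `p` and `q` by `p + q` shows that the integrand of the symmetric f-divergence is
`(p + q) / 2 * binDiv f (|p - q| / (p + q))`. A convex `f` has a convex perspective
`(x, t) ↦ t * f (x / t)`, so `binDiv f` is convex on `(-1, 1)`, and Jensen's inequality for the
probability density `(p + q) / 2` bounds the divergence below by `binDiv f` at the total variation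
distance. Being even as well as convex, `binDiv f` increases with `|s|`, and centring `X` at the
midpoint of its range bounds the normalized difference of expectations by the total variation
distance.
-/

open Set

section Convexity

theorem exists_forall_add_mul_sub_le_of_convexOn {s : Set ℝ} {g : ℝ → ℝ} (hg : ConvexOn ℝ s g)
    {x : ℝ} (hx : x ∈ interior s) : ∃ c, ∀ y ∈ s, g x + c * (y - x) ≤ g y := by
  refine ⟨derivWithin g (Ioi x) x, fun y hy => ?_⟩
  rcases lt_trichotomy x y with hxy | rfl | hyx
  · have hslope := hg.rightDeriv_le_slope_of_mem_interior hx hy hxy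
    rw [slope_def_field, le_div_iff₀ (sub_pos.2 hxy)] at hslope
    linarith
  · simp
  · have hslope := (hg.slope_le_leftDeriv_of_mem_interior hy hx hyx).trans
      (hg.leftDeriv_le_rightDeriv_of_mem_interior hx)
    rw [slope_def_field, div_le_iff₀ (sub_pos.2 hyx)] at hslope
    linarith

theorem le_of_abs_le_abs_of_convexOn_of_even {s : Set ℝ} {g : ℝ → ℝ} (hg : ConvexOn ℝ s g)
    (heven : g.Even) {x y : ℝ} (hx : x ∈ s) (hneg : -x ∈ s) (hyx : |y| ≤ |x|) : g y ≤ g x := by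
  have hy : y ∈ segment ℝ (-x) x := by
    rw [segment_eq_uIcc, mem_uIcc]
    grind
  simpa [heven x] using hg.le_max_of_mem_segment hneg hx hy

variable {E : Type*} [AddCommGroup E] [Module ℝ E]

/-- The perspective `(x, t) ↦ t f(x / t)` of `f`, which turns the convexity of `f` into joint
convexity in `x` and `t`. It is meaningful for `0 < t` only. -/
noncomputable def perspective (f : E → ℝ) (z : E × ℝ) : ℝ :=
  z.2 * f (z.2⁻¹ • z.1)

theorem inv_smul_add_smul_eq {t u : ℝ} (ht : t ≠ 0) (hu : u ≠ 0) (a b : ℝ) (x y : E) :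
    (a * t + b * u)⁻¹ • (a • x + b • y) =
      (a * t / (a * t + b * u)) • t⁻¹ • x + (b * u / (a * t + b * u)) • u⁻¹ • y := by
  simp only [smul_add, smul_smul, div_eq_inv_mul, mul_assoc, mul_inv_cancel₀ ht,
    mul_inv_cancel₀ hu, mul_one]

theorem convexOn_perspective {s : Set E} {f : E → ℝ} (hf : ConvexOn ℝ s f) :
    ConvexOn ℝ {z : E × ℝ | 0 < z.2 ∧ z.2⁻¹ • z.1 ∈ s} (perspective f) := by
  refine ⟨fun z ⟨hz, hzs⟩ w ⟨hw, hws⟩ a b ha hb hab => ?_,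
    fun z ⟨hz, hzs⟩ w ⟨hw, hws⟩ a b ha hb hab => ?_⟩
  · have hT : 0 < a * z.2 + b * w.2 := convex_Ioi (0 : ℝ) hz hw ha hb hab
    refine ⟨hT, ?_⟩
    simp only [Prod.fst_add, Prod.snd_add, Prod.smul_fst, Prod.smul_snd, smul_eq_mul]
    rw [inv_smul_add_smul_eq hz.ne' hw.ne']
    exact hf.1 hzs hws (by positivity) (by positivity) (by rw [← add_div, div_self hT.ne'])
  · have hT : 0 < a * z.2 + b * w.2 := convex_Ioi (0 : ℝ) hz hw ha hb hab
    simp only [perspective, Prod.fst_add, Prod.snd_add, Prod.smul_fst, Prod.smul_snd, smul_eq_mul]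
    rw [inv_smul_add_smul_eq hz.ne' hw.ne', ← le_div_iff₀' hT]
    refine (hf.2 hzs hws (by positivity) (by positivity)
      (by rw [← add_div, div_self hT.ne'])).trans_eq ?_
    simp only [smul_eq_mul]
    ring

end Convexity

section BinaryDivergence

theorem even_binDiv (f : ℝ → ℝ) : (binDiv f).Even := fun s => by
  simp only [binDiv, sub_neg_eq_add, ← sub_eq_add_neg]
  ring

theorem binDiv_abs (f : ℝ → ℝ) (s : ℝ) : binDiv f |s| = binDiv f s := by
  rcases abs_choice s with h | h <;> simp only [h, even_binDiv f s]

theorem convexOn_binDiv {f : ℝ → ℝ} (hf : ConvexOn ℝ (Ioi 0) f) :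
    ConvexOn ℝ (Ioo (-1) 1) (binDiv f) := by
  have hfirst : ConvexOn ℝ (Ioo (-1) 1) fun s => (1 - s) / 2 * f ((1 + s) / (1 - s)) := by
    let line : ℝ →ᵃ[ℝ] ℝ × ℝ := AffineMap.lineMap (1 / 2, 1 / 2) (1, 0)
    have hline (s : ℝ) : line s = ((1 + s) / 2, (1 - s) / 2) := by
      ext <;> simp [line, AffineMap.lineMap_apply] <;> ring
    refine (((convexOn_perspective hf).comp_affineMap line).subset (fun s hs => ?_)
      (convex_Ioo _ _)).congr fun s _ => ?_
    · rw [mem_preimage, hline]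
      have hadd : 0 < 1 + s := by linarith [hs.1]
      have hsub : 0 < 1 - s := by linarith [hs.2]
      exact ⟨half_pos hsub, mul_pos (inv_pos.2 (half_pos hsub)) (half_pos hadd)⟩
    · simp only [Function.comp_apply, hline, perspective, smul_eq_mul, inv_mul_eq_div,
        div_div_div_cancel_right₀ (two_ne_zero' ℝ)]
  have hsecond : ConvexOn ℝ (Ioo (-1) 1) fun s => (1 + s) / 2 * f ((1 - s) / (1 + s)) := by
    refine ((hfirst.comp_linearMap (-LinearMap.id)).subset (fun s hs => ?_)
      (convex_Ioo _ _)).congr fun s _ => ?_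
    · exact ⟨neg_lt_neg hs.2, neg_lt.1 hs.1⟩
    · simp [sub_eq_add_neg]
  exact hfirst.add hsecond

theorem abs_sub_div_add_mem_Ioo {a b : ℝ} (ha : 0 < a) (hb : 0 < b) :
    |(a - b) / (a + b)| ∈ Ioo (-1) 1 := by
  have hlt : |a - b| < a + b := abs_lt.2 ⟨by linarith, by linarith⟩
  refine ⟨neg_one_lt_zero.trans_le (abs_nonneg _), ?_⟩
  rwa [abs_div, abs_of_pos (add_pos ha hb), div_lt_one (add_pos ha hb)]

theorem mul_abs_div_of_pos {c : ℝ} (hc : 0 < c) (x : ℝ) : c * |x / c| = |x| := by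
  rw [abs_div, abs_of_pos hc, mul_div_cancel₀ _ hc.ne']

theorem add_mul_binDiv_abs_sub_div_add {a b : ℝ} (ha : 0 < a) (hb : 0 < b) (f : ℝ → ℝ) :
    (a + b) * binDiv f |(a - b) / (a + b)| = b * f (a / b) + a * f (b / a) := by
  have hadd : 1 + (a - b) / (a + b) = 2 * a / (a + b) := by field_simp; ring
  have hsub : 1 - (a - b) / (a + b) = 2 * b / (a + b) := by field_simp; ring
  have hab : a + b ≠ 0 := (add_pos ha hb).ne'
  rw [binDiv_abs, binDiv, hadd, hsub, div_div_div_cancel_right₀ hab, div_div_div_cancel_right₀ hab,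
    mul_div_mul_left _ _ two_ne_zero, mul_div_mul_left _ _ two_ne_zero]
  field_simp

end BinaryDivergence

section Divergence

variable {Ω : Type*} [MeasurableSpace Ω] {μ : Measure Ω}

theorem integral_pos_of_ae_pos (hμ : μ ≠ 0) {f : Ω → ℝ} (hf : Integrable f μ)
    (hpos : ∀ᵐ ω ∂μ, 0 < f ω) : 0 < ∫ ω, f ω ∂μ := by
  have hsupp : Function.support f =ᵐ[μ] univ :=
    Filter.eventuallyEq_univ.2 (hpos.mono fun _ h => h.ne')
  rw [integral_pos_iff_support_of_nonneg_ae (hpos.mono fun _ h => h.le) hf,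
    measure_congr hsupp]
  exact Measure.measure_univ_pos.2 hμ

/-- Unlike `ConvexOn.map_integral_le`, this form of Jensen's inequality allows a domain that is not
closed, such as `(-1, 1)` for `binDiv f`. -/
theorem map_integral_mul_le_of_convexOn {s : Set ℝ} {g : ℝ → ℝ} (hg : ConvexOn ℝ s g)
    {w t : Ω → ℝ} (hw : 0 ≤ᵐ[μ] w) (hw_one : ∫ ω, w ω ∂μ = 1) (ht : ∀ᵐ ω ∂μ, t ω ∈ s)
    (hwt : Integrable (fun ω => w ω * t ω) μ) (hwg : Integrable (fun ω => w ω * g (t ω)) μ)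
    (hmean : ∫ ω, w ω * t ω ∂μ ∈ interior s) :
    g (∫ ω, w ω * t ω ∂μ) ≤ ∫ ω, w ω * g (t ω) ∂μ := by
  set m := ∫ ω, w ω * t ω ∂μ with hm
  obtain ⟨c, hc⟩ := exists_forall_add_mul_sub_le_of_convexOn hg hmean
  have hw_int : Integrable w μ := .of_integral_ne_zero (by simp [hw_one])
  calc g m = ∫ ω, ((g m - c * m) * w ω + c * (w ω * t ω)) ∂μ := by
        rw [integral_add (hw_int.const_mul _) (hwt.const_mul _), integral_const_mul,
          integral_const_mul, hw_one, ← hm]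
        ring
    _ ≤ ∫ ω, w ω * g (t ω) ∂μ := by
        refine integral_mono_ae ((hw_int.const_mul _).add (hwt.const_mul _)) hwg ?_
        filter_upwards [hw, ht] with ω hwω htω
        linarith [mul_le_mul_of_nonneg_left (hc _ htω) hwω]

/-- The total variation distance between the probability densities `p` and `q` with respect to `μ`,
the quantity through which the expectations of a bounded variable are compared with the symmetric
f-divergence. -/
noncomputable def tvDist (μ : Measure Ω) (p q : Ω → ℝ) : ℝ :=
  (1 / 2) * ∫ ω, |p ω - q ω| ∂μ

/-- The symmetric f-divergence between the positive probability densities `p` and `q` with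
respect to `μ`. As a Bochner integral it is `0`, rather than `∞`, when the integrand is not
integrable. -/
noncomputable def symFDiv (μ : Measure Ω) (f : ℝ → ℝ) (p q : Ω → ℝ) : ℝ :=
  (1 / 2) * ∫ ω, (q ω * f (p ω / q ω) + p ω * f (q ω / p ω)) ∂μ

variable {p q : Ω → ℝ}

theorem abs_integral_mul_sub_integral_mul_le_tvDist (hp : Integrable p μ) (hq : Integrable q μ)
    (hpq : ∫ ω, p ω ∂μ = ∫ ω, q ω ∂μ) {X : Ω → ℝ} {a b : ℝ} (hX : ∀ᵐ ω ∂μ, X ω ∈ Icc a b)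
    (hXp : Integrable (fun ω => X ω * p ω) μ) (hXq : Integrable (fun ω => X ω * q ω) μ) :
    |(∫ ω, X ω * p ω ∂μ) - ∫ ω, X ω * q ω ∂μ| ≤ (b - a) * tvDist μ p q := by
  have hcentred : (∫ ω, X ω * p ω ∂μ) - ∫ ω, X ω * q ω ∂μ =
      ∫ ω, (X ω * p ω - X ω * q ω - (a + b) / 2 * (p ω - q ω)) ∂μ := by
    rw [integral_sub (by exact hXp.sub hXq) (by exact (hp.sub hq).const_mul _),
      integral_sub hXp hXq, integral_const_mul, integral_sub hp hq, hpq]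
    ring
  calc |(∫ ω, X ω * p ω ∂μ) - ∫ ω, X ω * q ω ∂μ|
      ≤ ∫ ω, |X ω * p ω - X ω * q ω - (a + b) / 2 * (p ω - q ω)| ∂μ :=
        hcentred ▸ abs_integral_le_integral_abs
    _ ≤ ∫ ω, (b - a) / 2 * |p ω - q ω| ∂μ := by
        refine integral_mono_ae ((hXp.sub hXq).sub ((hp.sub hq).const_mul _)).abs
          ((hp.sub hq).abs.const_mul _) ?_
        filter_upwards [hX] with ω ⟨haX, hXb⟩
        have hmid : |X ω - (a + b) / 2| ≤ (b - a) / 2 := abs_le.2 ⟨by linarith, by linarith⟩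
        calc |X ω * p ω - X ω * q ω - (a + b) / 2 * (p ω - q ω)|
            = |X ω - (a + b) / 2| * |p ω - q ω| := by rw [← abs_mul]; ring_nf
          _ ≤ (b - a) / 2 * |p ω - q ω| := by gcongr
    _ = (b - a) * tvDist μ p q := by rw [integral_const_mul, tvDist]; ring

theorem tvDist_lt_one (hp_pos : ∀ᵐ ω ∂μ, 0 < p ω) (hq_pos : ∀ᵐ ω ∂μ, 0 < q ω)
    (hp_one : ∫ ω, p ω ∂μ = 1) (hq_one : ∫ ω, q ω ∂μ = 1) : tvDist μ p q < 1 := by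
  have hp : Integrable p μ := .of_integral_ne_zero (by simp [hp_one])
  have hq : Integrable q μ := .of_integral_ne_zero (by simp [hq_one])
  have hμ : μ ≠ 0 := by rintro rfl; simp at hp_one
  have hgap : 0 < ∫ ω, (p ω + q ω - |p ω - q ω|) ∂μ := by
    refine integral_pos_of_ae_pos hμ ((hp.add hq).sub (hp.sub hq).abs) ?_
    filter_upwards [hp_pos, hq_pos] with ω hpω hqω
    exact sub_pos.2 (abs_lt.2 ⟨by linarith, by linarith⟩)
  rw [integral_sub (by exact hp.add hq) (by exact (hp.sub hq).abs), integral_add hp hq,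
    hp_one, hq_one] at hgap
  rw [tvDist]
  linarith

theorem binDiv_tvDist_le_symFDiv {f : ℝ → ℝ} (hf : ConvexOn ℝ (Ioi 0) f)
    (hp_pos : ∀ᵐ ω ∂μ, 0 < p ω) (hq_pos : ∀ᵐ ω ∂μ, 0 < q ω)
    (hp_one : ∫ ω, p ω ∂μ = 1) (hq_one : ∫ ω, q ω ∂μ = 1)
    (hint : Integrable (fun ω => q ω * f (p ω / q ω) + p ω * f (q ω / p ω)) μ) :
    binDiv f (tvDist μ p q) ≤ symFDiv μ f p q := by
  have hp : Integrable p μ := .of_integral_ne_zero (by simp [hp_one])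
  have hq : Integrable q μ := .of_integral_ne_zero (by simp [hq_one])
  let w : Ω → ℝ := fun ω => (p ω + q ω) / 2
  let t : Ω → ℝ := fun ω => |(p ω - q ω) / (p ω + q ω)|
  have hw_nonneg : 0 ≤ᵐ[μ] w := by
    filter_upwards [hp_pos, hq_pos] with ω hpω hqω using (half_pos (add_pos hpω hqω)).le
  have hw_one : ∫ ω, w ω ∂μ = 1 := by
    rw [integral_div, integral_add hp hq, hp_one, hq_one]
    norm_num
  have ht_mem : ∀ᵐ ω ∂μ, t ω ∈ Ioo (-1) 1 := by
    filter_upwards [hp_pos, hq_pos] with ω hpω hqω using abs_sub_div_add_mem_Ioo hpω hqω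
  have hwt : (fun ω => 1 / 2 * |p ω - q ω|) =ᵐ[μ] fun ω => w ω * t ω := by
    filter_upwards [hp_pos, hq_pos] with ω hpω hqω
    rw [← mul_abs_div_of_pos (add_pos hpω hqω)]
    ring
  have hwg : (fun ω => 1 / 2 * (q ω * f (p ω / q ω) + p ω * f (q ω / p ω))) =ᵐ[μ]
      fun ω => w ω * binDiv f (t ω) := by
    filter_upwards [hp_pos, hq_pos] with ω hpω hqω
    rw [← add_mul_binDiv_abs_sub_div_add hpω hqω]
    ring
  have hmean : tvDist μ p q = ∫ ω, w ω * t ω ∂μ := by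
    rw [← integral_congr_ae hwt, integral_const_mul, tvDist]
  have hmem : tvDist μ p q ∈ interior (Ioo (-1 : ℝ) 1) := by
    rw [interior_Ioo]
    exact ⟨neg_one_lt_zero.trans_le (by unfold tvDist; positivity),
      tvDist_lt_one hp_pos hq_pos hp_one hq_one⟩
  calc binDiv f (tvDist μ p q) ≤ ∫ ω, w ω * binDiv f (t ω) ∂μ := by
        rw [hmean] at hmem ⊢
        exact map_integral_mul_le_of_convexOn (convexOn_binDiv hf) hw_nonneg hw_one ht_mem
          (((hp.sub hq).abs.const_mul _).congr hwt) ((hint.const_mul _).congr hwg) hmem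
    _ = symFDiv μ f p q := by rw [← integral_congr_ae hwg, integral_const_mul, symFDiv]

theorem binDiv_expectation_diff_le_sym_fdiv_general {f : ℝ → ℝ} (hf : ConvexOn ℝ (Ioi 0) f)
    (hp_pos : ∀ᵐ ω ∂μ, 0 < p ω) (hq_pos : ∀ᵐ ω ∂μ, 0 < q ω)
    (hp_one : ∫ ω, p ω ∂μ = 1) (hq_one : ∫ ω, q ω ∂μ = 1)
    (hint : Integrable (fun ω => q ω * f (p ω / q ω) + p ω * f (q ω / p ω)) μ)
    {X : Ω → ℝ} {a b : ℝ} (hab : a < b) (hX : ∀ᵐ ω ∂μ, X ω ∈ Icc a b)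
    (hXp : Integrable (fun ω => X ω * p ω) μ) (hXq : Integrable (fun ω => X ω * q ω) μ) :
    binDiv f (|(∫ ω, X ω * p ω ∂μ) - ∫ ω, X ω * q ω ∂μ| / (b - a)) ≤ symFDiv μ f p q := by
  have hp : Integrable p μ := .of_integral_ne_zero (by simp [hp_one])
  have hq : Integrable q μ := .of_integral_ne_zero (by simp [hq_one])
  have hdiff : |(∫ ω, X ω * p ω ∂μ) - ∫ ω, X ω * q ω ∂μ| / (b - a) ≤ tvDist μ p q := by
    rw [div_le_iff₀' (sub_pos.2 hab)]
    exact abs_integral_mul_sub_integral_mul_le_tvDist hp hq (hp_one.trans hq_one.symm) hX hXp hXq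
  have hdiff_nonneg : 0 ≤ |(∫ ω, X ω * p ω ∂μ) - ∫ ω, X ω * q ω ∂μ| / (b - a) :=
    div_nonneg (abs_nonneg _) (sub_pos.2 hab).le
  have htv := tvDist_lt_one hp_pos hq_pos hp_one hq_one
  calc binDiv f (|(∫ ω, X ω * p ω ∂μ) - ∫ ω, X ω * q ω ∂μ| / (b - a))
      ≤ binDiv f (tvDist μ p q) :=
        le_of_abs_le_abs_of_convexOn_of_even (convexOn_binDiv hf) (even_binDiv f)
          ⟨by linarith, htv⟩ ⟨by linarith, by linarith⟩ (abs_le_abs_of_nonneg hdiff_nonneg hdiff)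
    _ ≤ symFDiv μ f p q := binDiv_tvDist_le_symFDiv hf hp_pos hq_pos hp_one hq_one hint

end Divergence

theorem binDiv_expectation_diff_le_sym_fdiv {Ω : Type*} [MeasurableSpace Ω]
    (μ : Measure Ω) (f : ℝ → ℝ)
    (hf : ContDiffOn ℝ 2 f (Set.Ioi 0))
    (hf'' : ∀ x : ℝ, 0 < x → 0 < deriv (deriv f) x)
    (hf1 : f 1 = 0)
    (p q : Ω → ℝ) (hp : Measurable p) (hq : Measurable q)
    (hppos : ∀ ω, 0 < p ω) (hqpos : ∀ ω, 0 < q ω)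
    (hpint : ∫ ω, p ω ∂μ = 1) (hqint : ∫ ω, q ω ∂μ = 1)
    (hint : Integrable
      (fun ω => (1 / 2) * (q ω * f (p ω / q ω) + p ω * f (q ω / p ω))) μ)
    (htv : (1 / 2) * ∫ ω, |p ω - q ω| ∂μ < 1)
    (X : Ω → ℝ) (hX : Measurable X)
    (M : ℝ) (hM : 0 < M) (hX0 : ∀ ω, 0 ≤ X ω) (hXM : ∀ ω, X ω ≤ M)
    (hXp : Integrable (fun ω => X ω * p ω) μ)
    (hXq : Integrable (fun ω => X ω * q ω) μ) :
    binDiv f (|(∫ ω, X ω * p ω ∂μ) - ∫ ω, X ω * q ω ∂μ| / M) ≤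
      (1 / 2) * ∫ ω, (q ω * f (p ω / q ω) + p ω * f (q ω / p ω)) ∂μ := by
  have hconv : ConvexOn ℝ (Set.Ioi 0) f :=
    (strictConvexOn_of_deriv2_pos' (convex_Ioi 0) hf.continuousOn hf'').convexOn
  have hint' := (integrable_const_mul_iff (isUnit_iff_ne_zero.2 one_half_pos.ne') _).1 hint
  simpa only [symFDiv, sub_zero] using binDiv_expectation_diff_le_sym_fdiv_general hconv
    (.of_forall hppos) (.of_forall hqpos) hpint hqint hint' hM
    (.of_forall fun ω => ⟨hX0 ω, hXM ω⟩) hXp hXq
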